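/- Let Y be a real Banach space with property (β), let ℓ ≥ 2 be an integer, let D ≥ 1, and suppose there exists a bi-Lipschitz embedding of P^ω_ℓ into Y with distortion at most D. Then c_Y(P^ω_{ℓ−1}) ≤ D·(1 − (2/3)·β̄_Y(2/D)). -/

import Mathlib

open Set Function Filter

open scoped ENNReal

attribute [local instance] Classical.propDecidable

noncomputable section

def LipUB {α β : Type*} (dα : α → α → ℝ) (dβ : β → β → ℝ) (f : α → β) (L : ℝ) : Prop :=
  ∀ a b : α, dβ (f a) (f b) ≤ L * dα a b

def CoLipUB {α β : Type*} (dα : α → α → ℝ) (dβ : β → β → ℝ) (f : α → β) (C : ℝ) : Prop :=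
  ∀ a b : α, dα a b ≤ C * dβ (f a) (f b)

def IsBiLipEmb {α β : Type*} (dα : α → α → ℝ) (dβ : β → β → ℝ) (f : α → β) : Prop :=
  Function.Injective f ∧ ∃ L C : ℝ, LipUB dα dβ f L ∧ CoLipUB dα dβ f C

def distortionSet (α β : Type*) (dα : α → α → ℝ) (dβ : β → β → ℝ) : Set ℝ :=
  {D | ∃ f : α → β, Function.Injective f ∧ ∃ L C : ℝ,
    LipUB dα dβ f L ∧ CoLipUB dα dβ f C ∧ D = L * C}

def cDist (α β : Type*) (dα : α → α → ℝ) (dβ : β → β → ℝ) : ℝ≥0∞ :=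
  ⨅ D ∈ distortionSet α β dα dβ, ENNReal.ofReal D
def rolewiczSet (Y : Type*) [SeminormedAddCommGroup Y] (t : ℝ) : Set ℝ :=
  {s | ∃ x : Y, ‖x‖ ≤ 1 ∧ ∃ y : ℕ → Y, (∀ i, ‖y i‖ ≤ 1) ∧
    (∀ n m : ℕ, n ≠ m → t ≤ ‖y n - y m‖) ∧ s = ⨅ i, ‖x - y i‖ / 2}

def rolewiczMod (Y : Type*) [SeminormedAddCommGroup Y] (t : ℝ) : ℝ :=
  1 - sSup (rolewiczSet Y t)

def HasBeta (Y : Type*) [SeminormedAddCommGroup Y] : Prop :=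
  ∀ t : ℝ, 0 < t → t ≤ 2 → 0 < rolewiczMod Y t

def HasBetaP (Y : Type*) [SeminormedAddCommGroup Y] (p γ : ℝ) : Prop :=
  ∀ t : ℝ, 0 < t → t ≤ 2 → (rolewiczSet Y t).Nonempty → γ * t ^ p ≤ rolewiczMod Y t
inductive P1V : Type | r | b | s | t (i : ℕ)

def parasolBase : Σ (Vt : Type) (Et : Type), Et → Vt × Vt :=
  ⟨P1V, Unit ⊕ ℕ ⊕ ℕ, fun e =>
    match e with
    | Sum.inl _ => (P1V.r, P1V.b)
    | Sum.inr (Sum.inl i) => (P1V.b, P1V.t i)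
    | Sum.inr (Sum.inr i) => (P1V.t i, P1V.s)⟩

def parasolStep (d : Σ (Vt : Type) (Et : Type), Et → Vt × Vt) :
    Σ (Vt : Type) (Et : Type), Et → Vt × Vt :=
  ⟨d.1 ⊕ d.2.1 × (Unit ⊕ ℕ), d.2.1 × (Unit ⊕ ℕ ⊕ ℕ), fun e =>
    match e with
    | (e, Sum.inl _) => (Sum.inl (d.2.2 e).1, Sum.inr (e, Sum.inl ()))
    | (e, Sum.inr (Sum.inl i)) => (Sum.inr (e, Sum.inl ()), Sum.inr (e, Sum.inr i))
    | (e, Sum.inr (Sum.inr i)) => (Sum.inr (e, Sum.inr i), Sum.inl (d.2.2 e).2)⟩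

def parasolData : ℕ → Σ (Vt : Type) (Et : Type), Et → Vt × Vt
  | 0 => parasolBase
  | (n+1) => parasolStep (parasolData n)

def PVert (n : ℕ) : Type := (parasolData n).1

def parasolGraph (n : ℕ) : SimpleGraph (PVert n) :=
  SimpleGraph.fromRel (fun x y => ∃ e, (parasolData n).2.2 e = (x, y))

def pGDist (n : ℕ) : PVert n → PVert n → ℝ :=
  fun x y => ((parasolGraph n).dist x y : ℝ)

/-!
Let `r, b, s, tᵢ` be the images in `Y` of the vertices of a parasol whose edges have length at
most `L` in `Y`. Rescale so that `b` is the origin and `L` is `1`: then `r` and the `tᵢ` lie in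
the unit ball, and the `tᵢ` are `2 / D`-separated because the embedding has distortion at most
`D`. The (β)-modulus bounds the infimum of `‖r - tᵢ‖` by `2 L (1 - β̄_Y(2 / D))`, and the
remaining edge `{tᵢ, s}` costs at most `L`, so `‖r - s‖ ≤ 3 L (1 - (2 / 3) β̄_Y(2 / D))`.
Replacing every edge of a graph by a parasol multiplies the distances between the original
vertices by `3`. Restricting the embedding to these vertices therefore divides its co-Lipschitz
constant by `3`, while its Lipschitz constant is multiplied by only
`3 (1 - (2 / 3) β̄_Y(2 / D))`.
-/

section Metric

variable {α β : Type*} {dα : α → α → ℝ} {dβ : β → β → ℝ} {f : α → β} {L C D : ℝ}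

lemma cDist_le_ofReal (hf : Injective f) (hL : LipUB dα dβ f L) (hC : CoLipUB dα dβ f C) :
    cDist α β dα dβ ≤ ENNReal.ofReal (L * C) :=
  iInf₂_le _ ⟨f, hf, L, C, hL, hC, rfl⟩

lemma LipUB.constants_pos (hL : LipUB dα dβ f L) (hC : CoLipUB dα dβ f C) {a b : α}
    (hβ : 0 ≤ dβ (f a) (f b)) (hα : 0 < dα a b) : 0 < L ∧ 0 < C := by
  have hCβ : 0 < C * dβ (f a) (f b) := hα.trans_le (hC a b)
  have hC₀ : 0 < C := pos_of_mul_pos_left hCβ hβ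
  have hLα : 0 < L * dα a b := (pos_of_mul_pos_right hCβ hC₀.le).trans_le (hL a b)
  exact ⟨pos_of_mul_pos_left hLα hα.le, hC₀⟩

lemma CoLipUB.div_mul_le (hC : CoLipUB dα dβ f C) (hL : 0 ≤ L) (hD : 0 < D) (hLC : L * C ≤ D)
    {a b : α} (hβ : 0 ≤ dβ (f a) (f b)) : dα a b / D * L ≤ dβ (f a) (f b) := by
  rw [div_mul_eq_mul_div, div_le_iff₀ hD]
  calc dα a b * L ≤ C * dβ (f a) (f b) * L := mul_le_mul_of_nonneg_right (hC a b) hL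
    _ = L * C * dβ (f a) (f b) := by ring
    _ ≤ D * dβ (f a) (f b) := mul_le_mul_of_nonneg_right hLC hβ
    _ = dβ (f a) (f b) * D := mul_comm _ _

end Metric

section Rolewicz

variable {Y : Type*} [SeminormedAddCommGroup Y] {t : ℝ}

lemma bddAbove_rolewiczSet : BddAbove (rolewiczSet Y t) := by
  refine ⟨1, ?_⟩
  rintro _ ⟨x, hx, y, hy, -, rfl⟩
  have hbdd : BddBelow (range fun i => ‖x - y i‖ / 2) := ⟨0, by rintro _ ⟨i, rfl⟩; positivity⟩
  linarith [ciInf_le hbdd 0, norm_sub_le x (y 0), hy 0]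

lemma rolewiczMod_le_one : rolewiczMod Y t ≤ 1 := by
  refine sub_le_self _ (Real.sSup_nonneg ?_)
  rintro _ ⟨x, -, y, -, -, rfl⟩
  exact Real.iInf_nonneg fun i => by positivity

lemma iInf_norm_sub_div_two_le {x : Y} {y : ℕ → Y} (hx : ‖x‖ ≤ 1) (hy : ∀ i, ‖y i‖ ≤ 1)
    (hsep : ∀ i j, i ≠ j → t ≤ ‖y i - y j‖) :
    ⨅ i, ‖x - y i‖ / 2 ≤ 1 - rolewiczMod Y t := by
  rw [rolewiczMod, sub_sub_cancel]
  exact le_csSup bddAbove_rolewiczSet ⟨x, hx, y, hy, hsep, rfl⟩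

variable [NormedSpace ℝ Y] {R : ℝ}

lemma iInf_dist_le_of_dist_le (hR : 0 < R) {x c : Y} {y : ℕ → Y} (hx : dist x c ≤ R)
    (hy : ∀ i, dist (y i) c ≤ R) (hsep : ∀ i j, i ≠ j → t * R ≤ dist (y i) (y j)) :
    ⨅ i, dist x (y i) ≤ 2 * R * (1 - rolewiczMod Y t) := by
  have norm_rescale (u v : Y) : ‖R⁻¹ • (u - c) - R⁻¹ • (v - c)‖ = R⁻¹ * dist u v := by
    rw [← smul_sub, sub_sub_sub_cancel_right, norm_smul_of_nonneg (inv_nonneg.2 hR.le),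
      dist_eq_norm]
  have norm_rescale_le {u : Y} (hu : dist u c ≤ R) : ‖R⁻¹ • (u - c)‖ ≤ 1 := by
    rwa [norm_smul_of_nonneg (inv_nonneg.2 hR.le), ← dist_eq_norm, inv_mul_le_one₀ hR]
  have hunit : ⨅ i, ‖R⁻¹ • (x - c) - R⁻¹ • (y i - c)‖ / 2 ≤ 1 - rolewiczMod Y t := by
    refine iInf_norm_sub_div_two_le (norm_rescale_le hx) (fun i => norm_rescale_le (hy i)) ?_
    intro i j hij
    rw [norm_rescale, le_inv_mul_iff₀ hR, mul_comm]
    exact hsep i j hij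
  calc ⨅ i, dist x (y i) = ⨅ i, 2 * R * (‖R⁻¹ • (x - c) - R⁻¹ • (y i - c)‖ / 2) := by
        congr! 2 with i
        rw [norm_rescale]
        field_simp
    _ = 2 * R * ⨅ i, ‖R⁻¹ • (x - c) - R⁻¹ • (y i - c)‖ / 2 :=
        (Real.mul_iInf_of_nonneg (by positivity) _).symm
    _ ≤ 2 * R * (1 - rolewiczMod Y t) := by gcongr

lemma dist_le_of_separated_parasol (hR : 0 < R) {r b s : Y} {z : ℕ → Y} (hrb : dist r b ≤ R)
    (hbz : ∀ i, dist b (z i) ≤ R) (hzs : ∀ i, dist (z i) s ≤ R)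
    (hsep : ∀ i j, i ≠ j → t * R ≤ dist (z i) (z j)) :
    dist r s ≤ 3 * R * (1 - (2 / 3) * rolewiczMod Y t) := by
  have hbelow : dist r s - R ≤ ⨅ i, dist r (z i) :=
    le_ciInf fun i => by linarith [dist_triangle r (z i) s, hzs i]
  have habove : ⨅ i, dist r (z i) ≤ 2 * R * (1 - rolewiczMod Y t) :=
    iInf_dist_le_of_dist_le hR hrb (fun i => dist_comm b (z i) ▸ hbz i) hsep
  linarith

end Rolewicz

section GraphDistance

variable {V X : Type*} {G : SimpleGraph V}

/-- The shortest-path metric of a graph with real values, the form `LipUB` and `cDist` take. -/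
def graphDist (G : SimpleGraph V) (u v : V) : ℝ := G.dist u v

lemma lipUB_graphDist_of_adj [PseudoMetricSpace X] (hG : G.Connected) {f : V → X} {K : ℝ}
    (hf : ∀ u v, G.Adj u v → dist (f u) (f v) ≤ K) :
    LipUB (graphDist G) (fun x y : X => dist x y) f K := by
  have dist_le_length {u v : V} (w : G.Walk u v) : dist (f u) (f v) ≤ K * w.length := by
    induction w with
    | nil => simp
    | @cons a b c hab w ih =>
      rw [SimpleGraph.Walk.length_cons]
      push_cast
      linarith [dist_triangle (f a) (f b) (f c), hf a b hab]
  intro u v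
  obtain ⟨w, hw⟩ := hG.exists_walk_length_eq_dist u v
  exact (dist_le_length w).trans_eq (by rw [hw, graphDist])

end GraphDistance

/-- A multigraph with oriented edges (vertices, edges, and the endpoints of each edge): the type on
which `parasolStep` acts, replacing every edge by a copy of `P^ω_1`. -/
abbrev EdgeGraph := Σ (Vt : Type) (Et : Type), Et → Vt × Vt

namespace EdgeGraph

/-- The endpoint of `e` that plays the role of `r` when `e` is replaced by a parasol. -/
abbrev src (d : EdgeGraph) (e : d.2.1) : d.1 := (d.2.2 e).1

/-- The endpoint of `e` that plays the role of `s` when `e` is replaced by a parasol. -/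
abbrev tgt (d : EdgeGraph) (e : d.2.1) : d.1 := (d.2.2 e).2

/-- The simple graph underlying an `EdgeGraph`; loops, orientations and multiplicities are lost. -/
def toGraph (d : EdgeGraph) : SimpleGraph d.1 :=
  SimpleGraph.fromRel fun x y => ∃ e, d.2.2 e = (x, y)

lemma rel_of_adj (d : EdgeGraph) {p : d.1 → d.1 → Prop} (hsymm : ∀ u v, p u v → p v u)
    (hedge : ∀ e, p (src d e) (tgt d e)) {u v : d.1} (h : (toGraph d).Adj u v) : p u v := by
  obtain ⟨-, ⟨e, he⟩ | ⟨e, he⟩⟩ := (SimpleGraph.fromRel_adj _ _ _).1 h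
  · simpa only [src, tgt, he] using hedge e
  · simpa only [src, tgt, he] using hsymm _ _ (hedge e)

lemma src_eq_tgt_or_adj (d : EdgeGraph) (e : d.2.1) :
    src d e = tgt d e ∨ (toGraph d).Adj (src d e) (tgt d e) :=
  or_iff_not_imp_left.2 fun h => (SimpleGraph.fromRel_adj _ _ _).2 ⟨h, Or.inl ⟨e, rfl⟩⟩

lemma reachable_src_tgt (d : EdgeGraph) (e : d.2.1) :
    (toGraph d).Reachable (src d e) (tgt d e) := by
  obtain h | h := src_eq_tgt_or_adj d e
  · rw [h]
  · exact h.reachable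

lemma dist_src_tgt_le_one (d : EdgeGraph) (e : d.2.1) :
    (toGraph d).dist (src d e) (tgt d e) ≤ 1 := by
  obtain h | h := src_eq_tgt_or_adj d e
  · simp [h]
  · exact (SimpleGraph.dist_eq_one_iff_adj.2 h).le

lemma lipUB_of_src_tgt {X : Type*} [PseudoMetricSpace X] {d : EdgeGraph}
    (hd : (toGraph d).Connected) {f : d.1 → X} {K : ℝ}
    (hf : ∀ e, dist (f (src d e)) (f (tgt d e)) ≤ K) :
    LipUB (graphDist (toGraph d)) (fun x y : X => dist x y) f K :=
  lipUB_graphDist_of_adj hd fun _ _ =>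
    rel_of_adj d (p := fun u v => dist (f u) (f v) ≤ K)
      (fun u v h => (dist_comm (f v) (f u)).trans_le h) hf

end EdgeGraph

open EdgeGraph

namespace parasolStep

variable (d : EdgeGraph)

/-- A vertex of `d`, seen in the graph where each edge of `d` is replaced by a parasol. -/
abbrev old (u : d.1) : (parasolStep d).1 := Sum.inl u

/-- The vertex `b` of the parasol that replaces the edge `e`. -/
abbrev hub (e : d.2.1) : (parasolStep d).1 := Sum.inr (e, Sum.inl ())

/-- The vertex `tᵢ` of the parasol that replaces the edge `e`. -/
abbrev tip (e : d.2.1) (i : ℕ) : (parasolStep d).1 := Sum.inr (e, Sum.inr i)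

lemma dist_old_src_hub_le_one (e : d.2.1) :
    (toGraph (parasolStep d)).dist (old d (src d e)) (hub d e) ≤ 1 :=
  dist_src_tgt_le_one (parasolStep d) (e, Sum.inl ())

lemma dist_hub_tip_le_one (e : d.2.1) (i : ℕ) :
    (toGraph (parasolStep d)).dist (hub d e) (tip d e i) ≤ 1 :=
  dist_src_tgt_le_one (parasolStep d) (e, Sum.inr (Sum.inl i))

lemma dist_tip_old_tgt_le_one (e : d.2.1) (i : ℕ) :
    (toGraph (parasolStep d)).dist (tip d e i) (old d (tgt d e)) ≤ 1 :=
  dist_src_tgt_le_one (parasolStep d) (e, Sum.inr (Sum.inr i))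

lemma reachable_old_src_hub (e : d.2.1) :
    (toGraph (parasolStep d)).Reachable (old d (src d e)) (hub d e) :=
  reachable_src_tgt (parasolStep d) (e, Sum.inl ())

lemma reachable_old_src_tip (e : d.2.1) (i : ℕ) :
    (toGraph (parasolStep d)).Reachable (old d (src d e)) (tip d e i) :=
  (reachable_old_src_hub d e).trans
    (reachable_src_tgt (parasolStep d) (e, Sum.inr (Sum.inl i)))

lemma reachable_old_src_old_tgt (e : d.2.1) :
    (toGraph (parasolStep d)).Reachable (old d (src d e)) (old d (tgt d e)) :=
  (reachable_old_src_tip d e 0).trans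
    (reachable_src_tgt (parasolStep d) (e, Sum.inr (Sum.inr 0)))

variable {d}

lemma reachable_old_old {u v : d.1} (h : (toGraph d).Reachable u v) :
    (toGraph (parasolStep d)).Reachable (old d u) (old d v) := by
  obtain ⟨w⟩ := h
  induction w with
  | nil => exact .refl _
  | cons hab _ ih =>
    exact (rel_of_adj d
      (p := fun a b => (toGraph (parasolStep d)).Reachable (old d a) (old d b))
      (fun _ _ => SimpleGraph.Reachable.symm) (reachable_old_src_old_tgt d) hab).trans ih

lemma connected (hd : (toGraph d).Connected) : (toGraph (parasolStep d)).Connected := by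
  obtain ⟨u⟩ := hd.nonempty
  refine (SimpleGraph.connected_iff_exists_forall_reachable _).2 ⟨old d u, ?_⟩
  have reachable_old (v : d.1) : (toGraph (parasolStep d)).Reachable (old d u) (old d v) :=
    reachable_old_old (hd.preconnected u v)
  rintro (v | ⟨e, ⟨⟩ | i⟩)
  · exact reachable_old v
  · exact (reachable_old _).trans (reachable_old_src_hub d e)
  · exact (reachable_old _).trans (reachable_old_src_tip d e i)

lemma not_adj_tip_tip (e e' : d.2.1) (i j : ℕ) :
    ¬ (toGraph (parasolStep d)).Adj (tip d e i) (tip d e' j) := fun h =>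
  rel_of_adj (parasolStep d)
    (p := fun u v => ¬ ((∃ e i, u = tip d e i) ∧ ∃ e i, v = tip d e i))
    (fun _ _ h huv => h huv.symm)
    (by rintro ⟨e, ⟨⟩ | i | i⟩ <;> rintro ⟨⟨_, _, ⟨⟩⟩, _, _, ⟨⟩⟩) h ⟨⟨e, i, rfl⟩, e', j, rfl⟩

lemma two_le_dist_tip_tip (hd : (toGraph d).Connected) (e : d.2.1) {i j : ℕ} (hij : i ≠ j) :
    2 ≤ (toGraph (parasolStep d)).dist (tip d e i) (tip d e j) :=
  (connected hd).one_lt_dist_of_ne_of_not_adj (by rintro ⟨⟩; exact hij rfl)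
    (not_adj_tip_tip e e i j)

/-- The distance from the old vertex `u` in the graph where each edge of `d` is replaced by a
parasol, expressed through distances in `d`: a new vertex is reached from one of the two ends of
its edge. For the lower bound on distances it is enough that this function is `1`-Lipschitz. -/
def distFromOld (u : d.1) : (parasolStep d).1 → ℕ
  | Sum.inl w => 3 * (toGraph d).dist u w
  | Sum.inr (e, Sum.inl _) =>
      min (3 * (toGraph d).dist u (src d e) + 1) (3 * (toGraph d).dist u (tgt d e) + 2)
  | Sum.inr (e, Sum.inr _) =>
      min (3 * (toGraph d).dist u (src d e) + 2) (3 * (toGraph d).dist u (tgt d e) + 1)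

lemma dist_distFromOld_src_tgt_le_one (hd : (toGraph d).Connected) (u : d.1)
    (e : (parasolStep d).2.1) :
    dist (distFromOld u (src (parasolStep d) e)) (distFromOld u (tgt (parasolStep d) e)) ≤ 1 := by
  rw [Nat.dist_eq, abs_sub_le_iff, sub_le_iff_le_add', sub_le_iff_le_add']
  norm_cast
  rcases e with ⟨e, e'⟩
  have hsrc := hd.dist_triangle (u := u) (v := src d e) (w := tgt d e)
  have htgt := hd.dist_triangle (u := u) (v := tgt d e) (w := src d e)
  have hedge := dist_src_tgt_le_one d e
  rw [SimpleGraph.dist_comm (u := tgt d e)] at htgt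
  rcases e' with ⟨⟩ | i | i <;> simp only [distFromOld, src, tgt, parasolStep] at * <;> omega

lemma lipUB_distFromOld (hd : (toGraph d).Connected) (u : d.1) :
    LipUB (graphDist (toGraph (parasolStep d))) (fun m n : ℕ => dist m n) (distFromOld u) 1 :=
  lipUB_of_src_tgt (connected hd) (dist_distFromOld_src_tgt_le_one hd u)

lemma three_mul_graphDist_le (hd : (toGraph d).Connected) (u v : d.1) :
    3 * graphDist (toGraph d) u v ≤ graphDist (toGraph (parasolStep d)) (old d u) (old d v) := by
  simpa [distFromOld, graphDist, Nat.dist_eq] using lipUB_distFromOld hd u (old d u) (old d v)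

section Embedding

variable {Y : Type*} {f : (parasolStep d).1 → Y} {L C D : ℝ}

lemma coLipUB_comp_old [Dist Y] (hd : (toGraph d).Connected)
    (hC : CoLipUB (graphDist (toGraph (parasolStep d))) (fun x y : Y => dist x y) f C) :
    CoLipUB (graphDist (toGraph d)) (fun x y : Y => dist x y) (f ∘ old d) (C / 3) := by
  intro u v
  have hf := (three_mul_graphDist_le hd u v).trans (hC (old d u) (old d v))
  simp only [comp_apply]
  linarith

lemma constants_pos_of_biLipschitz [PseudoMetricSpace Y] (hd : (toGraph d).Connected)
    (e : d.2.1) (hL : LipUB (graphDist (toGraph (parasolStep d))) (fun x y : Y => dist x y) f L)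
    (hC : CoLipUB (graphDist (toGraph (parasolStep d))) (fun x y : Y => dist x y) f C) :
    0 < L ∧ 0 < C := by
  refine hL.constants_pos hC dist_nonneg (a := tip d e 0) (b := tip d e 1) ?_
  exact Nat.cast_pos.2 (two_pos.trans_le (two_le_dist_tip_tip hd e zero_ne_one))

lemma separated_comp_tip [PseudoMetricSpace Y] (hd : (toGraph d).Connected) (hL₀ : 0 ≤ L)
    (hD : 0 < D) (hLC : L * C ≤ D)
    (hC : CoLipUB (graphDist (toGraph (parasolStep d))) (fun x y : Y => dist x y) f C)
    (e : d.2.1) {i j : ℕ} (hij : i ≠ j) :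
    2 / D * L ≤ dist (f (tip d e i)) (f (tip d e j)) := by
  have htips : 2 ≤ graphDist (toGraph (parasolStep d)) (tip d e i) (tip d e j) :=
    Nat.ofNat_le_cast.2 (two_le_dist_tip_tip hd e hij)
  calc 2 / D * L ≤ graphDist (toGraph (parasolStep d)) (tip d e i) (tip d e j) / D * L := by gcongr
    _ ≤ dist (f (tip d e i)) (f (tip d e j)) := hC.div_mul_le hL₀ hD hLC dist_nonneg

lemma lipUB_comp_old [SeminormedAddCommGroup Y] [NormedSpace ℝ Y] (hd : (toGraph d).Connected)
    (hL₀ : 0 < L) (hD : 0 < D) (hLC : L * C ≤ D)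
    (hL : LipUB (graphDist (toGraph (parasolStep d))) (fun x y : Y => dist x y) f L)
    (hC : CoLipUB (graphDist (toGraph (parasolStep d))) (fun x y : Y => dist x y) f C) :
    LipUB (graphDist (toGraph d)) (fun x y : Y => dist x y) (f ∘ old d)
      (3 * L * (1 - (2 / 3) * rolewiczMod Y (2 / D))) := by
  have dist_le {u v : (parasolStep d).1} (h : (toGraph (parasolStep d)).dist u v ≤ 1) :
      dist (f u) (f v) ≤ L :=
    (hL u v).trans (mul_le_of_le_one_right hL₀.le (Nat.cast_le_one.2 h))
  refine lipUB_of_src_tgt hd fun e => ?_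
  exact dist_le_of_separated_parasol hL₀ (dist_le (dist_old_src_hub_le_one d e))
    (fun i => dist_le (dist_hub_tip_le_one d e i))
    (fun i => dist_le (dist_tip_old_tgt_le_one d e i))
    (fun i j hij => separated_comp_tip hd hL₀.le hD hLC hC e hij)

end Embedding

end parasolStep

lemma connected_parasolBase : (toGraph parasolBase).Connected := by
  have hrb := reachable_src_tgt parasolBase (Sum.inl () : Unit ⊕ ℕ ⊕ ℕ)
  have hbt (i : ℕ) := reachable_src_tgt parasolBase (Sum.inr (Sum.inl i) : Unit ⊕ ℕ ⊕ ℕ)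
  have hts (i : ℕ) := reachable_src_tgt parasolBase (Sum.inr (Sum.inr i) : Unit ⊕ ℕ ⊕ ℕ)
  refine (SimpleGraph.connected_iff_exists_forall_reachable _).2 ⟨P1V.b, ?_⟩
  rintro (_ | _ | _ | i)
  · exact hrb.symm
  · exact .refl _
  · exact (hbt 0).trans (hts 0)
  · exact hbt i

lemma connected_parasolData (n : ℕ) : (toGraph (parasolData n)).Connected := by
  induction n with
  | zero => exact connected_parasolBase
  | succ n ih => exact parasolStep.connected ih

instance nonempty_edge_parasolData (n : ℕ) : Nonempty (parasolData n).2.1 := by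
  induction n with
  | zero => exact ⟨(Sum.inl () : Unit ⊕ ℕ ⊕ ℕ)⟩
  | succ n ih => exact ih.map fun e => (e, Sum.inl ())

theorem parasol_self_improvement_general
    {Y : Type*} [SeminormedAddCommGroup Y] [NormedSpace ℝ Y] {d : EdgeGraph} [Nonempty d.2.1]
    (hd : (toGraph d).Connected) {D : ℝ}
    (hemb : ∃ (f : (parasolStep d).1 → Y) (L C : ℝ), Injective f ∧
      LipUB (graphDist (toGraph (parasolStep d))) (fun a b : Y => dist a b) f L ∧
      CoLipUB (graphDist (toGraph (parasolStep d))) (fun a b : Y => dist a b) f C ∧ L * C ≤ D) :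
    cDist d.1 Y (graphDist (toGraph d)) (fun a b : Y => dist a b) ≤
      ENNReal.ofReal (D * (1 - (2 / 3) * rolewiczMod Y (2 / D))) := by
  obtain ⟨f, L, C, hf, hL, hC, hLC⟩ := hemb
  obtain ⟨e⟩ := ‹Nonempty d.2.1›
  obtain ⟨hL₀, hC₀⟩ := parasolStep.constants_pos_of_biLipschitz hd e hL hC
  have hD : 0 < D := (mul_pos hL₀ hC₀).trans_le hLC
  have hfactor : 0 ≤ 1 - (2 / 3) * rolewiczMod Y (2 / D) := by
    linarith [rolewiczMod_le_one (Y := Y) (t := 2 / D)]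
  refine (cDist_le_ofReal (hf.comp Sum.inl_injective)
    (parasolStep.lipUB_comp_old hd hL₀ hD hLC hL hC)
    (parasolStep.coLipUB_comp_old hd hC)).trans (ENNReal.ofReal_le_ofReal ?_)
  calc 3 * L * (1 - (2 / 3) * rolewiczMod Y (2 / D)) * (C / 3)
      = L * C * (1 - (2 / 3) * rolewiczMod Y (2 / D)) := by ring
    _ ≤ D * (1 - (2 / 3) * rolewiczMod Y (2 / D)) := mul_le_mul_of_nonneg_right hLC hfactor

/-- Proposition 2.7: if a Banach space `Y` has property (β) and the
level-`ℓ` parasol graph `P^ω_ℓ` (here `PVert (ℓ-1)` with its shortest path metric)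
embeds into `Y` with distortion at most `D`, then
`c_Y(P^ω_{ℓ-1}) ≤ D (1 - (2/3) β̄_Y(2/D))`. -/
theorem parasol_self_improvement
    (Y : Type*) [NormedAddCommGroup Y] [NormedSpace ℝ Y] [CompleteSpace Y]
    (hY : HasBeta Y) (l : ℕ) (hl : 2 ≤ l) (D : ℝ) (hD : 1 ≤ D)
    (hemb : ∃ (f : PVert (l - 1) → Y) (L C : ℝ), Function.Injective f ∧
      LipUB (pGDist (l - 1)) (fun a b : Y => dist a b) f L ∧
      CoLipUB (pGDist (l - 1)) (fun a b : Y => dist a b) f C ∧ L * C ≤ D) :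
    cDist (PVert (l - 2)) Y (pGDist (l - 2)) (fun a b : Y => dist a b) ≤
      ENNReal.ofReal (D * (1 - (2 / 3) * rolewiczMod Y (2 / D))) := by
  obtain ⟨n, rfl⟩ := Nat.exists_eq_add_of_le' hl
  exact parasol_self_improvement_general (connected_parasolData n) hemb

end
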